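/- arXiv:1111.2403 — 3 statements merged into one kernel-verified Lean document; each statement's English description precedes it below -/
import Mathlib

section
/- Let m ∈ ℕ and let n, k ∈ ℕ satisfy 2^k ≤ n < 2^{k+1} ≤ 4^m. Then W_m(n − 2^k) = W_m(n) · W_m(2^k), and moreover W_m(n) · W_m(2^k) = ε · W_m(2^k) · W_m(n), where ε = −1 if k is odd and 2^k + 2^{k−1} ≤ n < 2^{k+1}, and ε = 1 otherwise. -/
open Matrix

/-- The four 2×2 Rademacher matrices `r^{(γ₀,γ₁)}`, indexed by the two bits. -/
noncomputable def radMat : Bool → Bool → Matrix (Fin 2) (Fin 2) ℂ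
  | false, false => !![1, 0; 0, 1]
  | true,  false => !![1, 0; 0, -1]
  | false, true  => !![0, 1; 1, 0]
  | true,  true  => !![0, 1; -1, 0]

/-- The Walsh matrix `W_m(n) = r^{(γ₀,γ₁)} ⊗ r^{(γ₂,γ₃)} ⊗ ⋯ ⊗ r^{(γ_{2m-2},γ_{2m-1})}`
as a `2^m × 2^m` complex matrix, where `γ_i` are the binary digits of `n`. -/
noncomputable def walshMatrix : (m : ℕ) → ℕ → Matrix (Fin (2 ^ m)) (Fin (2 ^ m)) ℂ
  | 0, _ => 1
  | m + 1, n =>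
    Matrix.reindex
      ((finProdFinEquiv (m := 2) (n := 2 ^ m)).trans (finCongr (by ring)))
      ((finProdFinEquiv (m := 2) (n := 2 ^ m)).trans (finCongr (by ring)))
      (Matrix.kroneckerMap (· * ·) (radMat (n.testBit 0) (n.testBit 1)) (walshMatrix m (n / 4)))

/-!
Put `Z = r^{(1,0)}` and `X = r^{(0,1)}`. Then `r^{(a,b)} = Z ^ a * X ^ b` and `X * Z = -(Z * X)`, so
`r^{(a,a')} * r^{(b,b')} = (-1) ^ (a' * b) • r^{(a+b, a'+b')}` with bits added modulo 2. Taking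
Kronecker products, `W_m(a) * W_m(b) = ± W_m(a ^^^ b)`, with a minus sign when bit `2i + 1` of `a`
and bit `2i` of `b` are both set for an odd number of `i < m`. If `k` is the top bit of `n`,
then `n ^^^ 2 ^ k = n - 2 ^ k`, the sign of `W_m(n) * W_m(2 ^ k)` is `1`, and the sign of
`W_m(2 ^ k) * W_m(n)` is `-1` exactly when `k` is odd and bit `k - 1` of `n` is set.
-/

open scoped Kronecker

theorem xor_two_pow_eq_sub_of_testBit {n k : ℕ} (h : n.testBit k = true) :
    n ^^^ 2 ^ k = n - 2 ^ k := by
  have hodd : n / 2 ^ k % 2 = 1 := by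
    simpa only [Nat.testBit_eq_decide_div_mod_eq, decide_eq_true_eq] using h
  have hdiv : (n ^^^ 2 ^ k) / 2 ^ k = n / 2 ^ k - 1 := by
    rw [Nat.xor_div_two_pow, Nat.div_self (Nat.two_pow_pos k),
      Nat.xor_one_of_odd (Nat.odd_iff.mpr hodd)]
  have hmod : (n ^^^ 2 ^ k) % 2 ^ k = n % 2 ^ k := by
    rw [Nat.xor_mod_two_pow, Nat.mod_self, Nat.xor_zero]
  have hle : 2 ^ k ≤ 2 ^ k * (n / 2 ^ k) := Nat.le_mul_of_pos_right _ (by lia)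
  calc n ^^^ 2 ^ k = 2 ^ k * (n / 2 ^ k - 1) + n % 2 ^ k := by
        rw [← hdiv, ← hmod, Nat.div_add_mod]
    _ = 2 ^ k * (n / 2 ^ k) + n % 2 ^ k - 2 ^ k := by
        rw [Nat.mul_sub_one, Nat.sub_add_comm hle]
    _ = n - 2 ^ k := by rw [Nat.div_add_mod]

theorem testBit_iff_two_pow_succ_add_two_pow_le {n k : ℕ} (hle : 2 ^ (k + 1) ≤ n)
    (hlt : n < 2 ^ (k + 2)) : n.testBit k = true ↔ 2 ^ (k + 1) + 2 ^ k ≤ n := by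
  have htwo : 2 ≤ n / 2 ^ k := (Nat.le_div_iff_mul_le (Nat.two_pow_pos k)).mpr (by lia)
  have hfour : n / 2 ^ k < 4 := (Nat.div_lt_iff_lt_mul (Nat.two_pow_pos k)).mpr (by lia)
  calc n.testBit k = true ↔ n / 2 ^ k % 2 = 1 := by
        rw [Nat.testBit_eq_decide_div_mod_eq, decide_eq_true_eq]
    _ ↔ 3 ≤ n / 2 ^ k := by lia
    _ ↔ 2 ^ (k + 1) + 2 ^ k ≤ n := by
        rw [Nat.le_div_iff_mul_le (Nat.two_pow_pos k)]
        lia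

/-- The sign in the product rule `W_m(a) * W_m(b) = walshSign m a b • W_m(a ^^^ b)`: each Kronecker
factor contributes `-1` when its second bit in `a` and its first bit in `b` are both set. -/
noncomputable def walshSign (m a b : ℕ) : ℂ :=
  ∏ i ∈ Finset.range m, if a.testBit (2 * i + 1) && b.testBit (2 * i) then -1 else 1

theorem walshSign_succ (m a b : ℕ) :
    walshSign (m + 1) a b =
      walshSign m (a / 4) (b / 4) * if a.testBit 1 && b.testBit 0 then -1 else 1 := by
  have testBit_div_four (n i : ℕ) : (n / 4).testBit i = n.testBit (i + 2) :=
    Nat.testBit_div_two_pow (n := 2) n i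
  simp only [walshSign, Finset.prod_range_succ', testBit_div_four]
  rfl

theorem walshSign_mul_self (m a b : ℕ) : walshSign m a b * walshSign m a b = 1 := by
  rw [walshSign, ← Finset.prod_mul_distrib]
  exact Finset.prod_eq_one fun i _ ↦ by split_ifs <;> norm_num

theorem walshSign_two_pow_right {m n k : ℕ} (h : n.testBit (k + 1) = false) :
    walshSign m n (2 ^ k) = 1 := by
  refine Finset.prod_eq_one fun i _ ↦ if_neg ?_
  rw [Nat.testBit_two_pow, Bool.and_eq_true, decide_eq_true_eq]
  rintro ⟨hi, rfl⟩
  exact Bool.false_ne_true (h.symm.trans hi)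

theorem walshSign_two_pow_left_of_even {k : ℕ} (hk : Even k) (m n : ℕ) :
    walshSign m (2 ^ k) n = 1 := by
  refine Finset.prod_eq_one fun i _ ↦ if_neg ?_
  rw [Nat.testBit_two_pow, Bool.and_eq_true, decide_eq_true_eq]
  rintro ⟨rfl, -⟩
  exact Nat.not_even_bit1 i hk

theorem walshSign_two_pow_left_of_odd {m j : ℕ} (hj : j < m) (n : ℕ) :
    walshSign m (2 ^ (2 * j + 1)) n = if n.testBit (2 * j) then -1 else 1 := by
  rw [walshSign, Finset.prod_eq_single_of_mem j (Finset.mem_range.mpr hj)]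
  · simp only [Nat.testBit_two_pow_self, Bool.true_and]
  · intro i _ hij
    have hbit : (2 ^ (2 * j + 1)).testBit (2 * i + 1) = false :=
      Nat.testBit_two_pow_of_ne (by lia)
    simp only [hbit, Bool.false_and, Bool.false_eq_true, if_false]

theorem walshSign_two_pow_left {m n k : ℕ} (hle : 2 ^ k ≤ n) (hlt : n < 2 ^ (k + 1))
    (hk : k < 2 * m) :
    walshSign m (2 ^ k) n = if k % 2 = 1 ∧ 2 ^ k + 2 ^ (k - 1) ≤ n then -1 else 1 := by
  obtain hk_even | ⟨j, rfl⟩ := k.even_or_odd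
  · have hk_not_odd : k % 2 ≠ 1 := by rw [Nat.even_iff.mp hk_even]; exact zero_ne_one
    rw [walshSign_two_pow_left_of_even hk_even, if_neg fun h ↦ hk_not_odd h.1]
  · have hk_odd : (2 * j + 1) % 2 = 1 := by lia
    simp only [walshSign_two_pow_left_of_odd (show j < m by lia), Nat.add_sub_cancel, hk_odd,
      true_and, testBit_iff_two_pow_succ_add_two_pow_le hle hlt]

theorem radMat_mul (a a' b b' : Bool) :
    radMat a a' * radMat b b' =
      (if a' && b then (-1 : ℂ) else 1) • radMat (a ^^ b) (a' ^^ b') := by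
  cases a <;> cases a' <;> cases b <;> cases b' <;> simp [radMat]

theorem walshMatrix_succ (m n : ℕ) :
    walshMatrix (m + 1) n =
      reindexAlgEquiv ℂ ℂ (finProdFinEquiv.trans (finCongr (pow_succ' 2 m).symm))
        (radMat (n.testBit 0) (n.testBit 1) ⊗ₖ walshMatrix m (n / 4)) :=
  rfl

theorem walshMatrix_mul_s0 (m a b : ℕ) :
    walshMatrix m a * walshMatrix m b = walshSign m a b • walshMatrix m (a ^^^ b) := by
  induction m generalizing a b with
  | zero => simp [walshMatrix, walshSign]
  | succ m ih =>
    have xor_div_four : (a ^^^ b) / 4 = a / 4 ^^^ b / 4 := Nat.xor_div_two_pow (n := 2)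
    simp only [walshMatrix_succ, walshSign_succ, Nat.testBit_xor, xor_div_four, ← map_mul,
      ← mul_kronecker_mul, radMat_mul, ih, smul_kronecker, kronecker_smul, smul_smul, map_smul]

theorem walshMatrix_mul_swap (m a b : ℕ) :
    walshMatrix m a * walshMatrix m b =
      (walshSign m a b * walshSign m b a) • (walshMatrix m b * walshMatrix m a) := by
  rw [walshMatrix_mul_s0 m b a, smul_smul, mul_assoc, walshSign_mul_self, mul_one, Nat.xor_comm b a,
    walshMatrix_mul_s0]

theorem walsh_rademacher_relation (m n k : ℕ) (h₁ : 2 ^ k ≤ n) (h₂ : n < 2 ^ (k + 1))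
    (h₃ : 2 ^ (k + 1) ≤ 4 ^ m) :
    walshMatrix m (n - 2 ^ k) = walshMatrix m n * walshMatrix m (2 ^ k) ∧
    walshMatrix m n * walshMatrix m (2 ^ k) =
      (if k % 2 = 1 ∧ 2 ^ k + 2 ^ (k - 1) ≤ n then (-1 : ℂ) else 1) •
        (walshMatrix m (2 ^ k) * walshMatrix m n) := by
  have hbit : n.testBit k = true := Nat.testBit_of_two_pow_le_and_two_pow_add_one_gt h₁ h₂
  have hsign : walshSign m n (2 ^ k) = 1 := walshSign_two_pow_right (Nat.testBit_lt_two_pow h₂)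
  have hk : k < 2 * m := by
    rw [show 4 = 2 ^ 2 from rfl, ← pow_mul] at h₃
    exact (Nat.pow_le_pow_iff_right Nat.one_lt_two).mp h₃
  constructor
  · rw [walshMatrix_mul_s0, hsign, one_smul, xor_two_pow_eq_sub_of_testBit hbit]
  · rw [walshMatrix_mul_swap, hsign, one_mul, walshSign_two_pow_left h₁ h₂ hk]
end

section
/- For every m ∈ ℕ and all n, i with 0 ≤ n, i < 4^m, there exists ε ∈ {1, −1} such that W_m(n) · W_m(i) = ε · W_m(n XOR i), where n XOR i denotes the bitwise exclusive-or of the binary expansions of n and i. -/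
/-!
Put `Z = r^{(1,0)}` and `X = r^{(0,1)}`. Then `r^{(a,b)} = Z ^ a * X ^ b`, both `Z` and `X` are
involutions, and `X * Z = -(Z * X)`. Moving `X ^ b` past `Z ^ c` in
`Z ^ a * X ^ b * (Z ^ c * X ^ d)` costs a sign `(-1) ^ (b * c)`, after which the exponents
add modulo 2. Kronecker products multiply factor by factor, so the signs of the `m` tensor factors
multiply.
-/

open Matrix

open scoped Kronecker

section Monoid

variable {M : Type*} [Monoid M]

theorem pow_toNat_add_toNat {x : M} (hx : x ^ 2 = 1) (a b : Bool) :
    x ^ (a.toNat + b.toNat) = x ^ (a ^^ b).toNat := by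
  cases a <;> cases b <;> simp [hx]

variable {S : Type*} [CommMonoid S] [MulAction S M] [IsScalarTower S M M] [SMulCommClass S M M]

theorem mul_pow_of_mul_eq_smul_mul {q : S} {x z : M} (h : x * z = q • (z * x)) (c : ℕ) :
    x * z ^ c = q ^ c • (z ^ c * x) := by
  induction c with
  | zero => simp
  | succ c ih =>
    calc x * z ^ (c + 1) = x * z ^ c * z := by rw [pow_succ, mul_assoc]
      _ = q ^ c • (z ^ c * (x * z)) := by rw [ih, smul_mul_assoc, mul_assoc]
      _ = q ^ (c + 1) • (z ^ (c + 1) * x) := by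
        rw [h, mul_smul_comm, smul_smul, ← pow_succ, ← mul_assoc, ← pow_succ]

theorem pow_mul_pow_of_mul_eq_smul_mul {q : S} {x z : M} (h : x * z = q • (z * x)) (b c : ℕ) :
    x ^ b * z ^ c = q ^ (b * c) • (z ^ c * x ^ b) := by
  induction b with
  | zero => simp
  | succ b ih =>
    calc x ^ (b + 1) * z ^ c = x ^ b * (x * z ^ c) := by rw [pow_succ, mul_assoc]
      _ = q ^ c • (x ^ b * z ^ c * x) := by
        rw [mul_pow_of_mul_eq_smul_mul h, mul_smul_comm, mul_assoc]
      _ = q ^ ((b + 1) * c) • (z ^ c * x ^ (b + 1)) := by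
        rw [ih, smul_mul_assoc, smul_smul, ← pow_add, mul_assoc, ← pow_succ, add_comm c,
          ← Nat.succ_mul]

theorem pow_mul_pow_mul_pow_mul_pow_of_mul_eq_smul_mul {q : S} {x z : M}
    (h : x * z = q • (z * x)) (a b c d : ℕ) :
    z ^ a * x ^ b * (z ^ c * x ^ d) = q ^ (b * c) • (z ^ (a + c) * x ^ (b + d)) :=
  calc z ^ a * x ^ b * (z ^ c * x ^ d)
      = z ^ a * (x ^ b * z ^ c) * x ^ d := by simp only [mul_assoc]
    _ = q ^ (b * c) • (z ^ a * (z ^ c * x ^ b) * x ^ d) := by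
      rw [pow_mul_pow_of_mul_eq_smul_mul h, mul_smul_comm, smul_mul_assoc]
    _ = q ^ (b * c) • (z ^ (a + c) * x ^ (b + d)) := by simp only [pow_add, mul_assoc]

end Monoid

theorem radMat_true_false_sq : radMat true false ^ 2 = 1 := by
  simp [radMat, sq, one_fin_two]

theorem radMat_false_true_sq : radMat false true ^ 2 = 1 := by
  simp [radMat, sq, one_fin_two]

theorem radMat_false_true_mul_true_false :
    radMat false true * radMat true false = (-1 : ℂ) • (radMat true false * radMat false true) := by
  simp [radMat]

theorem radMat_eq_pow_mul_pow (a b : Bool) :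
    radMat a b = radMat true false ^ a.toNat * radMat false true ^ b.toNat := by
  cases a <;> cases b <;> simp [radMat, one_fin_two]

theorem radMat_mul_radMat (a b c d : Bool) :
    radMat a b * radMat c d = (-1 : ℂ) ^ (b.toNat * c.toNat) • radMat (a ^^ c) (b ^^ d) := by
  rw [radMat_eq_pow_mul_pow a b, radMat_eq_pow_mul_pow c d,
    pow_mul_pow_mul_pow_mul_pow_of_mul_eq_smul_mul radMat_false_true_mul_true_false,
    pow_toNat_add_toNat radMat_true_false_sq, pow_toNat_add_toNat radMat_false_true_sq,
    ← radMat_eq_pow_mul_pow]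

/-- The exponent `∑ γ_{2k+1} δ_{2k}` over `k < m` of the sign in `W_m(n) * W_m(i)`, where `γ` and
`δ` are the binary digits of `n` and `i`. It is kept as a natural number, although only its parity
matters. -/
def walshSignExponent (m n i : ℕ) : ℕ :=
  ∑ k ∈ Finset.range m, (n.testBit (2 * k + 1)).toNat * (i.testBit (2 * k)).toNat

theorem walshSignExponent_succ (m n i : ℕ) :
    walshSignExponent (m + 1) n i =
      (n.testBit 1).toNat * (i.testBit 0).toNat + walshSignExponent m (n / 4) (i / 4) := by
  have testBit_div_four (a k : ℕ) : (a / 4).testBit k = a.testBit (k + 2) :=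
    Nat.testBit_div_two_pow (n := 2) a k
  simp only [walshSignExponent, Finset.sum_range_succ', testBit_div_four]
  exact add_comm _ _

theorem walshMatrix_mul_general (m n i : ℕ) :
    walshMatrix m n * walshMatrix m i =
      (-1 : ℂ) ^ walshSignExponent m n i • walshMatrix m (n ^^^ i) := by
  induction m generalizing n i with
  | zero => simp [walshMatrix, walshSignExponent]
  | succ m ih =>
    have xor_div_four : (n ^^^ i) / 4 = (n / 4) ^^^ (i / 4) := Nat.xor_div_two_pow (n := 2)
    have kronecker_mul :
        (radMat (n.testBit 0) (n.testBit 1) ⊗ₖ walshMatrix m (n / 4)) *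
            (radMat (i.testBit 0) (i.testBit 1) ⊗ₖ walshMatrix m (i / 4)) =
          (-1 : ℂ) ^ walshSignExponent (m + 1) n i •
            (radMat ((n ^^^ i).testBit 0) ((n ^^^ i).testBit 1) ⊗ₖ
              walshMatrix m ((n ^^^ i) / 4)) := by
      rw [← mul_kronecker_mul, radMat_mul_radMat, ih, smul_kronecker, kronecker_smul, smul_smul,
        ← pow_add, ← walshSignExponent_succ, xor_div_four, Nat.testBit_xor, Nat.testBit_xor]
    simp only [walshMatrix, reindex_apply]
    rw [submatrix_mul_equiv, kronecker_mul, submatrix_smul, Pi.smul_apply, Pi.smul_apply]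

theorem walshMatrix_mul (m n i : ℕ) (hn : n < 4 ^ m) (hi : i < 4 ^ m) :
    ∃ ε : ℂ, (ε = 1 ∨ ε = -1) ∧
      walshMatrix m n * walshMatrix m i = ε • walshMatrix m (n ^^^ i) :=
  ⟨(-1) ^ walshSignExponent m n i, neg_one_pow_eq_or ℂ _, walshMatrix_mul_general m n i⟩
end

section
/- Let m ∈ ℕ and 0 ≤ n < 4^m with binary digits n = Σ_i γ_i 2^i. If γ_{2i+1} = 0 for every i, then W_m(n) is a diagonal matrix. If γ_{2i+1} = 1 for some i, then every diagonal entry of W_m(n) is zero; equivalently, the diagonal projection E (which sets all off-diagonal entries to 0) satisfies E(W_m(n)) = W_m(n) in the first case and E(W_m(n)) = 0 in the second. -/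
open Matrix

/-!
Diagonal entries of a Kronecker product are products of diagonal entries of the factors, so a
single factor `r^{(·,1)}`, whose diagonal is zero, makes the diagonal of `W_m(n)` vanish, while
factors `r^{(·,0)}` alone give a diagonal product. The bound `n < 4 ^ m` ensures that every nonzero
digit of `n` occurs in one of the `m` factors.
-/

open scoped Kronecker

theorem testBit_div_four (n k : ℕ) : (n / 4).testBit k = n.testBit (k + 2) :=
  Nat.testBit_div_two_pow (n := 2) n k

theorem lt_of_testBit_of_lt_two_pow {n i k : ℕ} (hi : n.testBit i = true) (hn : n < 2 ^ k) :
    i < k :=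
  (Nat.pow_lt_pow_iff_right one_lt_two).mp ((Nat.ge_two_pow_of_testBit hi).trans_lt hn)

theorem diag_kronecker_eq_zero_of_left {l p R : Type*} [MulZeroClass R] {A : Matrix l l R}
    (hA : A.diag = 0) (B : Matrix p p R) : (A ⊗ₖ B).diag = 0 :=
  funext fun j => mul_eq_zero_of_left (congrFun hA j.1) (B j.2 j.2)

theorem diag_kronecker_eq_zero_of_right {l p R : Type*} [MulZeroClass R] (A : Matrix l l R)
    {B : Matrix p p R} (hB : B.diag = 0) : (A ⊗ₖ B).diag = 0 :=
  funext fun j => mul_eq_zero_of_right (A j.1 j.1) (congrFun hB j.2)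

theorem isDiag_radMat_false (b : Bool) : (radMat b false).IsDiag := by
  intro i j hij
  cases b <;> fin_cases i <;> fin_cases j <;> simp_all [radMat]

theorem diag_radMat_true (b : Bool) : (radMat b true).diag = 0 := by
  ext i
  cases b <;> fin_cases i <;> simp [radMat]

theorem isDiag_walshMatrix {m n : ℕ} (h : ∀ i < m, n.testBit (2 * i + 1) = false) :
    (walshMatrix m n).IsDiag := by
  induction m generalizing n with
  | zero => exact isDiag_one
  | succ m ih =>
    have hfactor : (radMat (n.testBit 0) (n.testBit 1)).IsDiag := by
      rw [h 0 m.succ_pos]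
      exact isDiag_radMat_false _
    have htail : (walshMatrix m (n / 4)).IsDiag :=
      ih fun i hi => (testBit_div_four n _).trans (h (i + 1) (Nat.succ_lt_succ hi))
    exact (hfactor.kronecker htail).submatrix (Equiv.injective _)

theorem diag_walshMatrix_eq_zero {m n i : ℕ} (him : i < m)
    (hi : n.testBit (2 * i + 1) = true) : (walshMatrix m n).diag = 0 := by
  induction m generalizing n i with
  | zero => exact absurd him i.not_lt_zero
  | succ m ih =>
    have hkron : (radMat (n.testBit 0) (n.testBit 1) ⊗ₖ walshMatrix m (n / 4)).diag = 0 := by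
      cases i with
      | zero =>
        rw [hi]
        exact diag_kronecker_eq_zero_of_left (diag_radMat_true _) _
      | succ i =>
        exact diag_kronecker_eq_zero_of_right _
          (ih (Nat.lt_of_succ_lt_succ him) ((testBit_div_four n _).trans hi))
    rw [walshMatrix, reindex_apply, diag_submatrix, hkron, Pi.zero_comp]

theorem walshMatrix_diagonal_projection (m n : ℕ) (hn : n < 4 ^ m) :
    ((∀ i : ℕ, n.testBit (2 * i + 1) = false) →
      Matrix.diagonal (fun j => walshMatrix m n j j) = walshMatrix m n) ∧
    ((∃ i : ℕ, n.testBit (2 * i + 1) = true) →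
      (∀ j, walshMatrix m n j j = 0) ∧
        Matrix.diagonal (fun j => walshMatrix m n j j) = 0) := by
  refine ⟨fun h => (isDiag_walshMatrix fun i _ => h i).diagonal_diag, ?_⟩
  rintro ⟨i, hi⟩
  have hi_lt : 2 * i + 1 < 2 * m := lt_of_testBit_of_lt_two_pow hi (by rwa [pow_mul])
  have hdiag : (walshMatrix m n).diag = 0 := diag_walshMatrix_eq_zero (by lia) hi
  exact ⟨congrFun hdiag, (congrArg diagonal hdiag).trans diagonal_zero⟩
end
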